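/- In any 2-crossed module (L →δ H →∂ G, ▷, {·,·}_p), for all h₁, h₂ ∈ H one has {h₁, h₂}_p⁻¹ = (h₁h₂h₁⁻¹) ▷' {h₁, h₂⁻¹}_p. -/

import Mathlib

/-- A 2-crossed module `(L --δ--> H --∂--> G, ▷, Peiffer lifting)`:
groups `G H L`, homomorphisms `δ : L → H` (field `δ`) and `∂ : H → G` (field `bd`)
with `∂ ∘ δ = 1`, left actions `▷` of `G` on `H` and `L` by automorphisms
(fields `actH`, `actL`; `G` acts on itself by conjugation), and the Peiffer
lifting `{·,·}_p : H × H → L` (field `pf`), subject to the usual axioms. -/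
structure TwoCrossedModule (G H L : Type*) [Group G] [Group H] [Group L] where
  δ : L →* H
  bd : H →* G
  actH : G →* MulAut H
  actL : G →* MulAut L
  pf : H → H → L
  comp_eq_one : ∀ l : L, bd (δ l) = 1
  -- (i) g ▷ ∂(h) = ∂(g ▷ h), where G acts on itself by conjugation
  act_bd : ∀ (g : G) (h : H), g * bd h * g⁻¹ = bd (actH g h)
  -- (i) g ▷ δ(l) = δ(g ▷ l)
  act_δ : ∀ (g : G) (l : L), actH g (δ l) = δ (actL g l)
  -- (ii) g ▷ {h₁,h₂}_p = {g ▷ h₁, g ▷ h₂}_p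
  act_pf : ∀ (g : G) (h₁ h₂ : H), actL g (pf h₁ h₂) = pf (actH g h₁) (actH g h₂)
  -- (iii) δ({h₁,h₂}_p) = h₁h₂h₁⁻¹·(∂(h₁) ▷ h₂⁻¹)
  δ_pf : ∀ h₁ h₂ : H, δ (pf h₁ h₂) = h₁ * h₂ * h₁⁻¹ * actH (bd h₁) h₂⁻¹
  -- (iv) {δ(l₁), δ(l₂)}_p = l₁l₂l₁⁻¹l₂⁻¹
  pf_δ_δ : ∀ l₁ l₂ : L, pf (δ l₁) (δ l₂) = l₁ * l₂ * l₁⁻¹ * l₂⁻¹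
  -- (v) {h₁h₂, h₃}_p = {h₁, h₂h₃h₂⁻¹}_p · (∂(h₁) ▷ {h₂,h₃}_p)
  pf_mul_left : ∀ h₁ h₂ h₃ : H,
    pf (h₁ * h₂) h₃ = pf h₁ (h₂ * h₃ * h₂⁻¹) * actL (bd h₁) (pf h₂ h₃)
  -- (vi) {h₁, h₂h₃}_p = {h₁,h₂}_p · {h₁,h₃}_p · {⟨h₁,h₃⟩_p⁻¹, ∂(h₁) ▷ h₂}_p,
  -- where ⟨h₁,h₃⟩_p = h₁h₃h₁⁻¹·(∂(h₁) ▷ h₃⁻¹) is the Peiffer commutator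
  pf_mul_right : ∀ h₁ h₂ h₃ : H,
    pf h₁ (h₂ * h₃) = pf h₁ h₂ * pf h₁ h₃ *
      pf (h₁ * h₃ * h₁⁻¹ * actH (bd h₁) h₃⁻¹)⁻¹ (actH (bd h₁) h₂)
  -- (vii) {δ(l), h}_p · {h, δ(l)}_p = l·(∂(h) ▷ l⁻¹)
  pf_δ : ∀ (h : H) (l : L), pf (δ l) h * pf h (δ l) = l * actL (bd h) l⁻¹

namespace TwoCrossedModule

variable {G H L : Type*} [Group G] [Group H] [Group L]

/-- The map `▷' : H × L → L`, defined by `h ▷' l = l · {δ(l)⁻¹, h}_p`. -/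
def act' (X : TwoCrossedModule G H L) (h : H) (l : L) : L :=
  l * X.pf (X.δ l)⁻¹ h

end TwoCrossedModule

/-!
Axiom (vi) says that `{h₁, h₂h₃} = {h₁, h₂} · ((∂h₁ ▷ h₂) ▷' {h₁, h₃})`. Take `h₃ = h₂⁻¹` and put
`l = {h₁, h₂⁻¹}`: the inverse of `{h₁, h₂}` is `(∂h₁ ▷ h₂) ▷' l`, and `∂h₁ ▷ h₂ = h₁h₂h₁⁻¹ · δl` by
axiom (iii). Since `▷'` is an action for which `δl` acts by conjugation by `l`, the factor `δl`
fixes `l` and can be dropped.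
-/

namespace TwoCrossedModule

variable {G H L : Type*} [Group G] [Group H] [Group L] (X : TwoCrossedModule G H L)

theorem pf_one_left (h : H) : X.pf 1 h = 1 := by
  simpa using X.pf_mul_left 1 1 h

theorem pf_one_right (h : H) : X.pf h 1 = 1 := by
  simpa [pf_one_left] using X.pf_mul_right h 1 1

theorem actH_bd_eq_conj_mul_δ_pf (h₁ h₂ : H) :
    X.actH (X.bd h₁) h₂ = h₁ * h₂ * h₁⁻¹ * X.δ (X.pf h₁ h₂⁻¹) := by
  rw [X.δ_pf, inv_inv]
  group

theorem δ_pf_δ_inv_left (l : L) (h : H) :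
    X.δ (X.pf (X.δ l)⁻¹ h) = (X.δ l)⁻¹ * h * X.δ l * h⁻¹ := by
  simp [X.δ_pf, X.comp_eq_one]

theorem pf_mul_right_eq_mul_act' (h₁ h₂ h₃ : H) :
    X.pf h₁ (h₂ * h₃) = X.pf h₁ h₂ * X.act' (X.actH (X.bd h₁) h₂) (X.pf h₁ h₃) := by
  rw [X.pf_mul_right, ← X.δ_pf, act', mul_assoc]

theorem pf_δ_inv_mul_right (l : L) (h₁ h₂ : H) :
    X.pf (X.δ l)⁻¹ (h₁ * h₂) = X.pf (X.δ l)⁻¹ h₁ * X.act' h₁ (X.pf (X.δ l)⁻¹ h₂) := by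
  simp [pf_mul_right_eq_mul_act', X.comp_eq_one]

theorem act'_δ (l m : L) : X.act' (X.δ l) m = l * m * l⁻¹ := by
  rw [act', ← map_inv, X.pf_δ_δ]
  group

theorem act'_δ_mul (l : L) (h : H) (m : L) :
    X.act' (X.δ l * h) m = l * X.act' h m * l⁻¹ :=
  calc X.act' (X.δ l * h) m
      = X.act' (X.δ l) m * X.act' (X.δ l) (X.pf (X.δ m)⁻¹ h) := by
        simp only [act', pf_δ_inv_mul_right, mul_assoc]
    _ = l * (m * X.pf (X.δ m)⁻¹ h) * l⁻¹ := by
        rw [act'_δ, act'_δ]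
        group

theorem act'_apply_mul (h : H) (l m : L) :
    X.act' h (l * m) = X.act' h l * X.act' h m := by
  set p := X.pf (X.δ l)⁻¹ h with hp
  have conj_eq : (X.δ l)⁻¹ * h * X.δ l = X.δ p * h := by
    rw [hp, δ_pf_δ_inv_left, inv_mul_cancel_right]
  have pf_eq : X.pf (X.δ (l * m))⁻¹ h = X.pf (X.δ m)⁻¹ (X.δ p * h) * p := by
    rw [map_mul, mul_inv_rev, X.pf_mul_left, inv_inv, conj_eq]
    simp [hp, X.comp_eq_one]
  calc X.act' h (l * m)
      = l * X.act' (X.δ p * h) m * p := by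
        simp only [act', pf_eq, mul_assoc]
    _ = l * (p * X.act' h m * p⁻¹) * p := by rw [act'_δ_mul]
    _ = (l * p) * X.act' h m := by group

theorem act'_mul (h₁ h₂ : H) (l : L) :
    X.act' (h₁ * h₂) l = X.act' h₁ (X.act' h₂ l) :=
  calc X.act' (h₁ * h₂) l
      = X.act' h₁ l * X.act' h₁ (X.pf (X.δ l)⁻¹ h₂) := by
        simp only [act', pf_δ_inv_mul_right, mul_assoc]
    _ = X.act' h₁ (X.act' h₂ l) := (X.act'_apply_mul h₁ l _).symm

theorem act'_mul_δ_self (h : H) (l : L) : X.act' (h * X.δ l) l = X.act' h l := by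
  rw [act'_mul, act'_δ, mul_inv_cancel_right]

end TwoCrossedModule

/-- In any 2-crossed module, `{h₁, h₂}_p⁻¹ = (h₁h₂h₁⁻¹) ▷' {h₁, h₂⁻¹}_p`. -/
theorem pf_inv_eq_act'_conj {G H L : Type*} [Group G] [Group H] [Group L]
    (X : TwoCrossedModule G H L) (h₁ h₂ : H) :
    (X.pf h₁ h₂)⁻¹ = X.act' (h₁ * h₂ * h₁⁻¹) (X.pf h₁ h₂⁻¹) := by
  symm
  apply eq_inv_of_mul_eq_one_right
  calc X.pf h₁ h₂ * X.act' (h₁ * h₂ * h₁⁻¹) (X.pf h₁ h₂⁻¹)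
      = X.pf h₁ h₂ * X.act' (X.actH (X.bd h₁) h₂) (X.pf h₁ h₂⁻¹) := by
        rw [X.actH_bd_eq_conj_mul_δ_pf, X.act'_mul_δ_self]
    _ = X.pf h₁ (h₂ * h₂⁻¹) := (X.pf_mul_right_eq_mul_act' h₁ h₂ h₂⁻¹).symm
    _ = 1 := by rw [mul_inv_cancel, X.pf_one_right]
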